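/- arXiv:2312.13815 — 2 statements merged into one kernel-verified Lean document; each statement's English description precedes it below -/
import Mathlib

section
/- Let n ≥ 1, let ℓ₁,…,ℓ_n be pairwise distinct integers, let q be a nonzero complex number which is not a root of unity, and let u be a complex number with 1 − q^{2ℓ_k}u ≠ 0 for all k = 1,…,n. Then ∏_{j=1}^n (q^{−ℓ_j} − q^{ℓ_j+2}u)/(q^{−ℓ_j} − q^{ℓ_j}u) = q^{2n} + (q^{n−1} − q^{n+1}) · ∑_{k=1}^n (1/(1 − q^{2ℓ_k}u)) · (∏_{j=1}^n [ℓ_j − ℓ_k + 1]_q) / (∏_{j≠k} [ℓ_j − ℓ_k]_q). -/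
open Finset

/-- The `q`-number `[k]_q = (q^k − q^{−k})/(q − q⁻¹)` for `k ∈ ℤ`. -/
noncomputable def qint (q : ℂ) (k : ℤ) : ℂ := (q ^ k - q ^ (-k)) / (q - q⁻¹)

/-! The left-hand side is `∏ⱼ (1 - t aⱼ u) / (1 - aⱼ u)` with `aⱼ = q ^ (2 ℓⱼ)` and `t = q ^ 2`.
As a rational function of `u` it has simple poles at the `aₖ⁻¹` and tends to `t ^ n` at infinity,
so Lagrange interpolation gives its partial fraction expansion
`t ^ n + (1 - t) ∑ₖ (∏_{j ≠ k} (t aⱼ - aₖ) / (aⱼ - aₖ)) / (1 - aₖ u)`. Each factor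
`(t aⱼ - aₖ) / (aⱼ - aₖ)` equals `q [ℓⱼ - ℓₖ + 1] / [ℓⱼ - ℓₖ]`, and the `j = k` numerator is
`[1] = 1`. -/

lemma zpow_injective_of_not_isOfFinOrder {G₀ : Type*} [GroupWithZero G₀] {a : G₀} (ha0 : a ≠ 0)
    (ha : ¬IsOfFinOrder a) : Function.Injective fun k : ℤ => a ^ k := by
  lift a to G₀ˣ using ha0.isUnit
  rw [Units.isOfFinOrder_val] at ha
  intro k l hkl
  exact injective_zpow_iff_not_isOfFinOrder.2 ha (Units.ext (by simpa using hkl))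

section PartialFractions

variable {K ι : Type*} [Field K] [DecidableEq ι] {s : Finset ι}

lemma prod_sub_div_sub_eq_one_add_sum {v : ι → K} (hv : Set.InjOn v s) (w : ι → K) {x : K}
    (hx : ∀ k ∈ s, x ≠ v k) :
    ∏ j ∈ s, (x - w j) / (x - v j) =
      1 + ∑ k ∈ s, (∏ j ∈ s, (v k - w j)) / (∏ j ∈ s.erase k, (v k - v j)) / (x - v k) := by
  have hdeg : (Lagrange.nodal s w - Lagrange.nodal s v).degree < #s := by
    rw [← Lagrange.degree_nodal (R := K) (v := w)]
    refine Polynomial.degree_sub_lt_left ?_ Lagrange.nodal_ne_zero ?_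
    · rw [Lagrange.degree_nodal, Lagrange.degree_nodal]
    · rw [Lagrange.nodal_monic.leadingCoeff, Lagrange.nodal_monic.leadingCoeff]
  have hbary := congrArg (Polynomial.eval x) (Lagrange.eq_interpolate hv hdeg)
  rw [Lagrange.eval_interpolate_not_at_node _ hx, Polynomial.eval_sub] at hbary
  have hne : Polynomial.eval x (Lagrange.nodal s v) ≠ 0 := Lagrange.eval_nodal_not_at_node hx
  rw [prod_div_distrib, ← Lagrange.eval_nodal, ← Lagrange.eval_nodal, div_eq_iff hne, add_mul,
    one_mul, ← sub_eq_iff_eq_add', hbary, mul_comm]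
  congr 1
  refine sum_congr rfl fun k hk => ?_
  rw [Polynomial.eval_sub, Lagrange.eval_nodal_at_node hk, Lagrange.eval_nodal,
    Lagrange.nodalWeight, prod_inv_distrib]
  ring

lemma pow_card_mul_prod_inv_sub_inv_div {a : ι → K} (ha0 : ∀ j ∈ s, a j ≠ 0) {t : K} (ht : t ≠ 0)
    {k : ι} (hk : k ∈ s) :
    t ^ #s * (∏ j ∈ s, ((a k)⁻¹ - (t * a j)⁻¹)) / (∏ j ∈ s.erase k, ((a k)⁻¹ - (a j)⁻¹)) =
      -(1 - t) / a k * ∏ j ∈ s.erase k, (t * a j - a k) / (a j - a k) := by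
  have hak := ha0 k hk
  rw [← prod_const, ← prod_mul_distrib, ← mul_prod_erase s _ hk, mul_div_assoc,
    ← prod_div_distrib]
  congr 1
  · field_simp
    ring
  · refine prod_congr rfl fun j hj => ?_
    have haj := ha0 j (mem_of_mem_erase hj)
    rw [inv_sub_inv hak haj, inv_sub_inv hak (mul_ne_zero ht haj)]
    field_simp

lemma prod_one_sub_mul_div_eq_pow_add_sum {a : ι → K} (ha : Set.InjOn a s) (ha0 : ∀ j ∈ s, a j ≠ 0)
    {t : K} (ht : t ≠ 0) {u : K} (hu : ∀ k ∈ s, 1 - a k * u ≠ 0) :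
    ∏ j ∈ s, (1 - t * a j * u) / (1 - a j * u) =
      t ^ #s + (1 - t) *
        ∑ k ∈ s, 1 / (1 - a k * u) * ∏ j ∈ s.erase k, (t * a j - a k) / (a j - a k) := by
  have hsub (k : ι) (hk : k ∈ s) : u - (a k)⁻¹ = -(1 - a k * u) / a k := by
    field_simp [ha0 k hk]
    ring
  have hpole (k : ι) (hk : k ∈ s) : u ≠ (a k)⁻¹ :=
    sub_ne_zero.1 (hsub k hk ▸ div_ne_zero (neg_ne_zero.2 (hu k hk)) (ha0 k hk))
  have hfactor (j : ι) (hj : j ∈ s) : (1 - t * a j * u) / (1 - a j * u) =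
      t * ((u - (t * a j)⁻¹) / (u - (a j)⁻¹)) := by
    have := ha0 j hj
    have := hu j hj
    rw [hsub j hj]
    field_simp
    ring
  rw [prod_congr rfl hfactor, prod_mul_distrib, prod_const,
    prod_sub_div_sub_eq_one_add_sum (v := fun j => (a j)⁻¹) (inv_injective.comp_injOn ha) _ hpole,
    mul_add, mul_one, mul_sum, mul_sum]
  congr 1
  refine sum_congr rfl fun k hk => ?_
  have := ha0 k hk
  have := hu k hk
  rw [← mul_div_assoc, ← mul_div_assoc, pow_card_mul_prod_inv_sub_inv_div ha0 ht hk, hsub k hk]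
  field_simp

end PartialFractions

/-- The `q`-number `[k]_q = (q ^ k - q ^ (-k)) / (q - q⁻¹)` over an arbitrary field; `qint` is the
case of the complex numbers. Its value is `0` when `q = q⁻¹`. -/
def qNumber {K : Type*} [Field K] (q : K) (k : ℤ) : K := (q ^ k - q ^ (-k)) / (q - q⁻¹)

section QNumber

variable {K : Type*} [Field K] {q : K}

lemma sub_inv_ne_zero_of_sq_ne_one (hq0 : q ≠ 0) (hq2 : q ^ 2 ≠ 1) : q - q⁻¹ ≠ 0 := by
  rwa [sub_ne_zero, Ne, ← mul_eq_one_iff_eq_inv₀ hq0, ← sq]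

lemma qNumber_one (hq : q - q⁻¹ ≠ 0) : qNumber q 1 = 1 := by
  rw [qNumber, zpow_one, zpow_neg_one, div_self hq]

lemma qNumber_sub (hq0 : q ≠ 0) (k l : ℤ) :
    qNumber q (k - l) = q ^ (-(k + l)) * (q ^ (2 * k) - q ^ (2 * l)) / (q - q⁻¹) := by
  rw [qNumber, mul_sub, ← zpow_add₀ hq0, ← zpow_add₀ hq0]
  ring_nf

lemma qNumber_sub_add_one_div_qNumber_sub (hq0 : q ≠ 0) (hq : q - q⁻¹ ≠ 0) (k l : ℤ) :
    qNumber q (k - l + 1) / qNumber q (k - l) =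
      q⁻¹ * ((q ^ 2 * q ^ (2 * k) - q ^ (2 * l)) / (q ^ (2 * k) - q ^ (2 * l))) := by
  have hexp : q ^ (-(k + 1 + l)) = q ^ (-(k + l)) * q⁻¹ := by
    rw [← zpow_sub_one₀ hq0]
    ring_nf
  have hsq : q ^ (2 * (k + 1)) = q ^ 2 * q ^ (2 * k) := by
    rw [mul_add_one, add_comm, zpow_add₀ hq0, zpow_ofNat]
  rw [sub_add_eq_add_sub, qNumber_sub hq0, qNumber_sub hq0, div_div_div_cancel_right₀ hq, hexp,
    hsq, mul_assoc, mul_div_mul_left _ _ (zpow_ne_zero _ hq0), mul_div_assoc]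

lemma prod_qNumber_div_prod_erase {ι : Type*} [DecidableEq ι] {s : Finset ι} {k : ι} (hk : k ∈ s)
    (hq0 : q ≠ 0) (hq : q - q⁻¹ ≠ 0) (ℓ : ι → ℤ) :
    (∏ j ∈ s, qNumber q (ℓ j - ℓ k + 1)) / (∏ j ∈ s.erase k, qNumber q (ℓ j - ℓ k)) =
      q ^ (1 - (#s : ℤ)) * ∏ j ∈ s.erase k,
        (q ^ 2 * q ^ (2 * ℓ j) - q ^ (2 * ℓ k)) / (q ^ (2 * ℓ j) - q ^ (2 * ℓ k)) := by
  have hcard : q⁻¹ ^ #(s.erase k) = q ^ (1 - (#s : ℤ)) := by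
    rw [← card_erase_add_one hk, ← zpow_natCast, inv_zpow', Nat.cast_add_one]
    ring_nf
  rw [← mul_prod_erase s _ hk, sub_self, zero_add, qNumber_one hq, one_mul, ← prod_div_distrib,
    prod_congr rfl fun j _ => qNumber_sub_add_one_div_qNumber_sub hq0 hq (ℓ j) (ℓ k),
    prod_mul_distrib, prod_const, hcard]

lemma zpow_neg_sub_div_zpow_neg_sub (hq0 : q ≠ 0) (k : ℤ) (u : K) :
    (q ^ (-k) - q ^ (k + 2) * u) / (q ^ (-k) - q ^ k * u) =
      (1 - q ^ 2 * q ^ (2 * k) * u) / (1 - q ^ (2 * k) * u) := by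
  have hk : q ^ k = q ^ (-k) * q ^ (2 * k) := by
    rw [← zpow_add₀ hq0]
    ring_nf
  rw [← mul_div_mul_left _ (1 - q ^ (2 * k) * u) (zpow_ne_zero (-k) hq0), zpow_add₀ hq0, hk,
    zpow_ofNat]
  ring_nf

end QNumber

theorem stmt_13_general {K ι : Type*} [Field K] [DecidableEq ι] (s : Finset ι) {q : K}
    (hq0 : q ≠ 0) (hq2 : q ^ 2 ≠ 1) {ℓ : ι → ℤ} (hℓ : Set.InjOn (fun j => q ^ (2 * ℓ j)) s)
    {u : K} (hu : ∀ k ∈ s, 1 - q ^ (2 * ℓ k) * u ≠ 0) :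
    ∏ j ∈ s, (q ^ (-ℓ j) - q ^ (ℓ j + 2) * u) / (q ^ (-ℓ j) - q ^ (ℓ j) * u) =
      q ^ (2 * (#s : ℤ)) +
        (q ^ ((#s : ℤ) - 1) - q ^ ((#s : ℤ) + 1)) *
          ∑ k ∈ s,
            (1 / (1 - q ^ (2 * ℓ k) * u)) *
              ((∏ j ∈ s, qNumber q (ℓ j - ℓ k + 1)) /
                (∏ j ∈ s.erase k, qNumber q (ℓ j - ℓ k))) := by
  have hq := sub_inv_ne_zero_of_sq_ne_one hq0 hq2
  have hlead : q ^ (2 * (#s : ℤ)) = (q ^ 2) ^ #s := by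
    rw [zpow_mul, zpow_natCast, zpow_ofNat]
  have hcoeff : (q ^ ((#s : ℤ) - 1) - q ^ ((#s : ℤ) + 1)) * q ^ (1 - (#s : ℤ)) = 1 - q ^ 2 := by
    rw [sub_mul, ← zpow_add₀ hq0, ← zpow_add₀ hq0, ← zpow_ofNat q 2]
    ring_nf
    simp
  rw [prod_congr rfl fun j _ => zpow_neg_sub_div_zpow_neg_sub hq0 (ℓ j) u,
    prod_one_sub_mul_div_eq_pow_add_sum hℓ (fun j _ => zpow_ne_zero _ hq0) (pow_ne_zero 2 hq0) hu,
    hlead, ← hcoeff, mul_assoc, mul_sum]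
  congr 2
  refine sum_congr rfl fun k hk => ?_
  rw [prod_qNumber_div_prod_erase hk hq0 hq, mul_left_comm]

/-- For pairwise distinct integers `ℓ₁,…,ℓ_n`, `q` not a root of unity and
`u ∈ ℂ` with `1 − q^{2ℓ_k}u ≠ 0` for all `k`,
`∏_j (q^{−ℓ_j} − q^{ℓ_j+2}u)/(q^{−ℓ_j} − q^{ℓ_j}u)
  = q^{2n} + (q^{n−1} − q^{n+1}) ∑_k (1 − q^{2ℓ_k}u)⁻¹ ·
      (∏_j [ℓ_j − ℓ_k + 1]_q)/(∏_{j≠k} [ℓ_j − ℓ_k]_q)`. -/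
theorem stmt_13 (n : ℕ) (hn : 1 ≤ n) (q : ℂ) (hq0 : q ≠ 0)
    (hq : ∀ k : ℕ, k ≠ 0 → q ^ k ≠ 1)
    (ℓ : Fin n → ℤ) (hℓ : Function.Injective ℓ)
    (u : ℂ) (hu : ∀ k : Fin n, 1 - q ^ (2 * ℓ k) * u ≠ 0) :
    ∏ j : Fin n, (q ^ (-ℓ j) - q ^ (ℓ j + 2) * u) / (q ^ (-ℓ j) - q ^ (ℓ j) * u) =
      q ^ (2 * (n : ℤ)) +
        (q ^ ((n : ℤ) - 1) - q ^ ((n : ℤ) + 1)) *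
          ∑ k : Fin n,
            (1 / (1 - q ^ (2 * ℓ k) * u)) *
              ((∏ j : Fin n, qint q (ℓ j - ℓ k + 1)) /
                (∏ j ∈ Finset.univ.erase k, qint q (ℓ j - ℓ k))) := by
  have hfin : ¬IsOfFinOrder q := fun h =>
    let ⟨k, hk, hqk⟩ := isOfFinOrder_iff_pow_eq_one.1 h
    hq k hk.ne' hqk
  have hinj : Function.Injective fun j => q ^ (2 * ℓ j) :=
    (zpow_injective_of_not_isOfFinOrder hq0 hfin).comp ((mul_right_injective₀ two_ne_zero).comp hℓ)
  simpa only [card_fin] using!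
    stmt_13_general univ hq0 (hq 2 two_ne_zero) hinj.injOn fun k _ => hu k
end

section
/- Let n ≥ 1, let ℓ₁,…,ℓ_n be pairwise distinct integers, and let q be a nonzero complex number which is not a root of unity. Then ∑_{k=1}^n (∏_{j=1}^n [ℓ_j − ℓ_k + 1]_q) / (∏_{j≠k} [ℓ_j − ℓ_k]_q) = [n]_q. -/
open Finset

/-!
Put `x k = q ^ ℓ k`, `y k = x k ^ 2` and `t = q ^ 2`. Up to a power of `q` the `k`-th summand is
`∏_{j ≠ k} (t y j - y k) / (y j - y k)`. The polynomial `∏ (X - t y j) - ∏ (X - y j)` has degree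
less than `n`, so it equals its Lagrange interpolant at the nodes `y k`, where its value is
`(1 - t) y k ∏_{j ≠ k} (y k - t y j)`. Evaluating the interpolant at `0`, where the polynomial is
`(t ^ n - 1) ∏ (-y j)`, gives the sum.
-/

section Lagrange

theorem degree_nodal_sub_nodal_lt {ι R : Type*} [CommRing R] [Nontrivial R] (s : Finset ι)
    (x y : ι → R) : (Lagrange.nodal s x - Lagrange.nodal s y).degree < #s := by
  have h := Polynomial.degree_sub_lt_left (p := Lagrange.nodal s x) (q := Lagrange.nodal s y)
    (by simp only [Lagrange.degree_nodal]) Lagrange.nodal_ne_zero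
    (by rw [Lagrange.nodal_monic.leadingCoeff, Lagrange.nodal_monic.leadingCoeff])
  rwa [Lagrange.degree_nodal] at h

variable {ι K : Type*} [DecidableEq ι] [Field K] {s : Finset ι} {y : ι → K}

theorem eval_eq_eval_nodal_mul_sum_nodalWeight {p : Polynomial K} {a : K} (hy : Set.InjOn y s)
    (hp : p.degree < #s) (ha : ∀ i ∈ s, a ≠ y i) :
    p.eval a = (Lagrange.nodal s y).eval a *
      ∑ k ∈ s, Lagrange.nodalWeight s y k * (a - y k)⁻¹ * p.eval (y k) := by
  conv_lhs => rw [Lagrange.eq_interpolate hy hp, Lagrange.eval_interpolate_not_at_node _ ha]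

theorem sub_one_mul_sum_prod_erase_div (t : K) (hy : Set.InjOn y s) (hy0 : ∀ i ∈ s, y i ≠ 0) :
    (t - 1) * ∑ k ∈ s, ∏ j ∈ s.erase k, (t * y j - y k) / (y j - y k) = t ^ #s - 1 := by
  set p := Lagrange.nodal s (fun j => t * y j) - Lagrange.nodal s y with hp
  have zero_ne_node : ∀ i ∈ s, 0 ≠ y i := fun i hi => (hy0 i hi).symm
  have eval_zero : p.eval 0 = (Lagrange.nodal s y).eval 0 * (t ^ #s - 1) := by
    simp only [hp, Polynomial.eval_sub, Lagrange.eval_nodal, zero_sub, ← mul_neg,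
      prod_mul_distrib, prod_const]
    ring
  have eval_node {k : ι} (hk : k ∈ s) :
      p.eval (y k) = (0 - y k) * ((t - 1) * ∏ j ∈ s.erase k, (y k - t * y j)) := by
    rw [hp, Polynomial.eval_sub, Lagrange.eval_nodal_at_node hk, Lagrange.eval_nodal,
      ← mul_prod_erase s _ hk]
    ring
  have flip_signs (j k : ι) :
      (t * y j - y k) / (y j - y k) = (y k - y j)⁻¹ * (y k - t * y j) := by
    rw [← neg_div_neg_eq, neg_sub, neg_sub, div_eq_inv_mul]
  apply mul_left_cancel₀ (Lagrange.eval_nodal_not_at_node zero_ne_node)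
  rw [← eval_zero, eval_eq_eval_nodal_mul_sum_nodalWeight hy
    (degree_nodal_sub_nodal_lt s _ y) zero_ne_node, mul_sum]
  congr 1
  refine sum_congr rfl fun k hk => ?_
  rw [← hp, eval_node hk, mul_assoc, inv_mul_cancel_left₀ (sub_ne_zero.2 (zero_ne_node k hk)),
    mul_left_comm, Lagrange.nodalWeight, ← prod_mul_distrib]
  simp only [flip_signs]

end Lagrange

section QBracket

variable {K : Type*} [Field K]

/-- The `q`-number in multiplicative form, `[k]_q` being `qBracket q (q ^ k)`. Its second argument
is any element of the field, not necessarily a power of `q`. -/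
def qBracket (q x : K) : K := (x - x⁻¹) / (q - q⁻¹)

theorem qint_eq_qBracket (q : ℂ) (k : ℤ) : qint q k = qBracket q (q ^ k) := by
  rw [qint, qBracket, zpow_neg]

theorem qBracket_self {q : K} (hq : q ≠ q⁻¹) : qBracket q q = 1 :=
  div_self (sub_ne_zero.2 hq)

theorem qBracket_div_mul_div_qBracket_div {q a b : K} (hq : q ≠ q⁻¹) (ha : a ≠ 0) (hb : b ≠ 0) :
    qBracket q (b / a * q) / qBracket q (b / a) =
      q⁻¹ * ((q ^ 2 * b ^ 2 - a ^ 2) / (b ^ 2 - a ^ 2)) := by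
  have hq0 : q ≠ 0 := by rintro rfl; simp at hq
  have numerator : b / a * q - (b / a * q)⁻¹ =
      (q ^ 2 * b ^ 2 - a ^ 2) / (a * b) * q⁻¹ := by field_simp
  have denominator : b / a - (b / a)⁻¹ = (b ^ 2 - a ^ 2) / (a * b) := by field_simp
  rw [qBracket, qBracket, div_div_div_cancel_right₀ (sub_ne_zero.2 hq), numerator, denominator,
    mul_div_right_comm, div_div_div_cancel_right₀ (mul_ne_zero ha hb), mul_comm]

end QBracket

theorem zpow_injective_of_pow_ne_one {G₀ : Type*} [GroupWithZero G₀] {q : G₀} (hq0 : q ≠ 0)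
    (hq : ∀ k : ℕ, k ≠ 0 → q ^ k ≠ 1) : Function.Injective fun k : ℤ => q ^ k := by
  have not_finOrder : ¬IsOfFinOrder (Units.mk0 q hq0) := by
    rw [← Units.isOfFinOrder_val, isOfFinOrder_iff_pow_eq_one]
    rintro ⟨k, hk, hqk⟩
    exact hq k hk.ne' hqk
  intro a b hab
  exact injective_zpow_iff_not_isOfFinOrder.2 not_finOrder
    (Units.ext (by simpa only [Units.val_zpow_eq_zpow_val, Units.val_mk0] using hab))

theorem stmt_14_general {ι K : Type*} [DecidableEq ι] [Field K] {q : K} (hq : q ≠ q⁻¹)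
    {s : Finset ι} {x : ι → K} (hx0 : ∀ i ∈ s, x i ≠ 0) (hx : Set.InjOn (fun i => x i ^ 2) s) :
    ∑ k ∈ s, (∏ j ∈ s, qBracket q (x j / x k * q)) /
      (∏ j ∈ s.erase k, qBracket q (x j / x k)) = qBracket q (q ^ #s) := by
  have hq0 : q ≠ 0 := by rintro rfl; simp at hq
  have summand {k : ι} (hk : k ∈ s) :
      (∏ j ∈ s, qBracket q (x j / x k * q)) / (∏ j ∈ s.erase k, qBracket q (x j / x k)) =
        q * q⁻¹ ^ #s *
          ∏ j ∈ s.erase k, (q ^ 2 * x j ^ 2 - x k ^ 2) / (x j ^ 2 - x k ^ 2) := by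
    have prod_inv : ∏ _j ∈ s.erase k, q⁻¹ = q * q⁻¹ ^ #s := by
      rw [← prod_const, ← mul_prod_erase s _ hk, mul_inv_cancel_left₀ hq0]
    rw [← mul_prod_erase s _ hk, div_self (hx0 k hk), one_mul, qBracket_self hq, one_mul,
      ← prod_div_distrib, ← prod_inv, ← prod_mul_distrib]
    exact prod_congr rfl fun j hj =>
      qBracket_div_mul_div_qBracket_div hq (hx0 k hk) (hx0 j (mem_of_mem_erase hj))
  have sum_eq := sub_one_mul_sum_prod_erase_div (q ^ 2) hx fun i hi => pow_ne_zero 2 (hx0 i hi)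
  rw [sum_congr rfl fun k hk => summand hk, ← mul_sum, qBracket,
    eq_div_iff (sub_ne_zero.2 hq)]
  calc
    _ = q⁻¹ ^ #s * ((q ^ 2 - 1) * ∑ k ∈ s, ∏ j ∈ s.erase k,
          (q ^ 2 * x j ^ 2 - x k ^ 2) / (x j ^ 2 - x k ^ 2)) := by field_simp
    _ = q⁻¹ ^ #s * ((q ^ 2) ^ #s - 1) := by rw [sum_eq]
    _ = q ^ #s - (q ^ #s)⁻¹ := by rw [pow_right_comm, inv_pow]; field_simp

/-- For pairwise distinct integers `ℓ₁,…,ℓ_n` and `q` not a root of unity,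
`∑_{k=1}^n (∏_{j=1}^n [ℓ_j − ℓ_k + 1]_q) / (∏_{j≠k} [ℓ_j − ℓ_k]_q) = [n]_q`. -/
theorem stmt_14 (n : ℕ) (hn : 1 ≤ n) (q : ℂ) (hq0 : q ≠ 0)
    (hq : ∀ k : ℕ, k ≠ 0 → q ^ k ≠ 1)
    (ℓ : Fin n → ℤ) (hℓ : Function.Injective ℓ) :
    ∑ k : Fin n,
        (∏ j : Fin n, qint q (ℓ j - ℓ k + 1)) /
          (∏ j ∈ Finset.univ.erase k, qint q (ℓ j - ℓ k)) = qint q n := by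
  have zpow_inj := zpow_injective_of_pow_ne_one hq0 hq
  have hq_inv : q ≠ q⁻¹ := by simpa using zpow_inj.ne (show (1 : ℤ) ≠ -1 by decide)
  have sq_inj : Function.Injective fun i => (q ^ ℓ i) ^ 2 := by
    simpa only [Function.comp_def, zpow_mul, zpow_ofNat] using
      zpow_inj.comp ((mul_left_injective₀ (two_ne_zero (α := ℤ))).comp hℓ)
  simpa only [qint_eq_qBracket, zpow_add_one₀ hq0, zpow_sub₀ hq0, zpow_natCast, card_univ,
    Fintype.card_fin] using
    stmt_14_general hq_inv (s := univ) (fun i _ => zpow_ne_zero (ℓ i) hq0) sq_inj.injOn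
end
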